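/- arXiv:2603.01201 — 2 statements merged into one kernel-verified Lean document; each statement's English description precedes it below -/
import Mathlib

section
/- Let φ be an LTLf formula in negation normal form over a set of atoms P, and let A be a DFA over the alphabet 2^P whose accepted words are exactly the finite, possibly empty traces satisfying φ. Then for every finite trace h ∈ (2^P)^*, the DFA progression A_h of A through h accepts exactly the finite, possibly empty traces satisfying prog(φ, h). -/
inductive LTLf (P : Type) : Type where
  | tt : LTLf P
  | ff : LTLf P
  | atom : P → LTLf P
  | natom : P → LTLf P
  | conj : LTLf P → LTLf P → LTLf P
  | disj : LTLf P → LTLf P → LTLf P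
  | next : LTLf P → LTLf P
  | wnext : LTLf P → LTLf P
  | untl : LTLf P → LTLf P → LTLf P
  | release : LTLf P → LTLf P → LTLf P
  deriving DecidableEq

def LTLf.Sat {P : Type} : List (Set P) → LTLf P → Prop
  | _, .tt => True
  | _, .ff => False
  | [], .atom _ => False
  | w :: _, .atom p => p ∈ w
  | [], .natom _ => False
  | w :: _, .natom p => p ∉ w
  | τ, .conj φ₁ φ₂ => LTLf.Sat τ φ₁ ∧ LTLf.Sat τ φ₂
  | τ, .disj φ₁ φ₂ => LTLf.Sat τ φ₁ ∨ LTLf.Sat τ φ₂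
  | [], .next _ => False
  | _ :: τ, .next φ => τ ≠ [] ∧ LTLf.Sat τ φ
  | [], .wnext _ => True
  | _ :: τ, .wnext φ => τ = [] ∨ LTLf.Sat τ φ
  | [], .untl _ _ => False
  | w :: τ, .untl φ₁ φ₂ =>
      LTLf.Sat (w :: τ) φ₂ ∨ (LTLf.Sat (w :: τ) φ₁ ∧ LTLf.Sat τ (.untl φ₁ φ₂))
  | [], .release _ _ => True
  | w :: τ, .release φ₁ φ₂ =>
      LTLf.Sat (w :: τ) φ₂ ∧ (LTLf.Sat (w :: τ) φ₁ ∨ LTLf.Sat τ (.release φ₁ φ₂))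
termination_by τ φ => (τ.length, sizeOf φ)

open Classical in
noncomputable def LTLf.prog {P : Type} : LTLf P → Set P → LTLf P
  | .tt, _ => .tt
  | .ff, _ => .ff
  | .atom p, w => if p ∈ w then .tt else .ff
  | .natom p, w => if p ∈ w then .ff else .tt
  | .conj φ₁ φ₂, w => .conj (φ₁.prog w) (φ₂.prog w)
  | .disj φ₁ φ₂, w => .disj (φ₁.prog w) (φ₂.prog w)
  | .next φ, _ => .conj φ (.untl .tt .tt)
  | .wnext φ, _ => .disj φ (.release .ff .ff)
  | .untl φ₁ φ₂, w =>
      .disj (φ₂.prog w) (.conj (φ₁.prog w) (.conj (.untl φ₁ φ₂) (.untl .tt .tt)))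
  | .release φ₁ φ₂, w =>
      .conj (φ₂.prog w) (.disj (φ₁.prog w) (.disj (.release φ₁ φ₂) (.release .ff .ff)))

noncomputable def LTLf.progTrace {P : Type} (φ : LTLf P) (h : List (Set P)) : LTLf P :=
  h.foldl LTLf.prog φ

/-- The DFA progression of `A` through the word `h`: same DFA, but with start state
progressed to the state that `A` reaches from its start state on reading `h`. -/
def DFA.progress {α σ : Type*} (A : DFA α σ) (h : List α) : DFA α σ where
  step := A.step
  start := A.evalFrom A.start h
  accept := A.accept

/-- The product of two DFAs over a common alphabet: pairs of states, componentwise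
transitions, pairs of accepting states. -/
def DFA.product {α σ₁ σ₂ : Type*} (A₁ : DFA α σ₁) (A₂ : DFA α σ₂) : DFA α (σ₁ × σ₂) where
  step := fun s a => (A₁.step s.1 a, A₂.step s.2 a)
  start := (A₁.start, A₂.start)
  accept := {s | s.1 ∈ A₁.accept ∧ s.2 ∈ A₂.accept}

/-!
Each side of the claim is a left quotient by `h`: moving the start state of `A` along `h` replaces
the language of `A` by its left quotient, and progression does the same to the language of a
formula, since `τ` satisfies `prog φ w` exactly when `w :: τ` satisfies `φ`. The latter is an
induction on `φ` in which `U` and `R` are unfolded by their expansion laws; the formulas `tt U tt`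
and `ff R ff` express that the remaining trace is nonempty, respectively empty.
-/

theorem accepts_progress {α σ : Type*} (A : DFA α σ) (h : List α) :
    (A.progress h).accepts = A.accepts.leftQuotient h :=
  (Language.leftQuotient_accepts_apply A h).symm

namespace LTLf

variable {P : Type}

section

variable (w : Set P) (τ : List (Set P)) (φ φ₁ φ₂ : LTLf P)

theorem sat_conj : Sat τ (.conj φ₁ φ₂) ↔ Sat τ φ₁ ∧ Sat τ φ₂ := by
  cases τ <;> simp [Sat]

theorem sat_disj : Sat τ (.disj φ₁ φ₂) ↔ Sat τ φ₁ ∨ Sat τ φ₂ := by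
  cases τ <;> simp [Sat]

theorem sat_next_cons : Sat (w :: τ) (.next φ) ↔ Sat τ φ ∧ τ ≠ [] := by
  rw [Sat, and_comm]

theorem sat_wnext_cons : Sat (w :: τ) (.wnext φ) ↔ Sat τ φ ∨ τ = [] := by
  rw [Sat, or_comm]

theorem sat_untl_tt_tt : Sat τ (.untl .tt .tt) ↔ τ ≠ [] := by
  cases τ <;> simp [Sat]

theorem sat_release_ff_ff : Sat τ (.release .ff .ff) ↔ τ = [] := by
  cases τ <;> simp [Sat]

-- The expansion laws fail on the empty trace: it satisfies `tt` but no until formula, and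
-- falsifies `ff` but no release formula.
theorem sat_untl_cons_iff_expansion :
    Sat (w :: τ) (.untl φ₁ φ₂) ↔
      Sat (w :: τ) (.disj φ₂ (.conj φ₁ (.next (.untl φ₁ φ₂)))) := by
  have ne_nil_of_sat : Sat τ (.untl φ₁ φ₂) → τ ≠ [] := by
    rintro hτ rfl
    simp [Sat] at hτ
  rw [sat_disj, sat_conj, sat_next_cons, and_iff_left_of_imp ne_nil_of_sat, Sat]

theorem sat_release_cons_iff_expansion :
    Sat (w :: τ) (.release φ₁ φ₂) ↔
      Sat (w :: τ) (.conj φ₂ (.disj φ₁ (.wnext (.release φ₁ φ₂)))) := by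
  have sat_of_eq_nil : τ = [] → Sat τ (.release φ₁ φ₂) := by
    rintro rfl
    simp [Sat]
  rw [sat_conj, sat_disj, sat_wnext_cons, or_iff_left_of_imp sat_of_eq_nil, Sat]

end

theorem prog_untl (φ₁ φ₂ : LTLf P) (w : Set P) :
    (untl φ₁ φ₂).prog w =
      .disj (φ₂.prog w) (.conj (φ₁.prog w) ((next (.untl φ₁ φ₂)).prog w)) :=
  rfl

theorem prog_release (φ₁ φ₂ : LTLf P) (w : Set P) :
    (release φ₁ φ₂).prog w =
      .conj (φ₂.prog w) (.disj (φ₁.prog w) ((wnext (.release φ₁ φ₂)).prog w)) :=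
  rfl

theorem sat_prog_next (φ : LTLf P) (w : Set P) (τ : List (Set P)) :
    Sat τ ((next φ).prog w) ↔ Sat (w :: τ) (.next φ) := by
  rw [prog, sat_conj, sat_untl_tt_tt, sat_next_cons]

theorem sat_prog_wnext (φ : LTLf P) (w : Set P) (τ : List (Set P)) :
    Sat τ ((wnext φ).prog w) ↔ Sat (w :: τ) (.wnext φ) := by
  rw [prog, sat_disj, sat_release_ff_ff, sat_wnext_cons]

theorem sat_prog (φ : LTLf P) (w : Set P) (τ : List (Set P)) :
    Sat τ (φ.prog w) ↔ Sat (w :: τ) φ := by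
  induction φ with
  | tt => simp [prog, Sat]
  | ff => simp [prog, Sat]
  | atom p => by_cases hp : p ∈ w <;> simp [prog, Sat, hp]
  | natom p => by_cases hp : p ∈ w <;> simp [prog, Sat, hp]
  | conj φ₁ φ₂ ih₁ ih₂ => rw [prog, sat_conj, sat_conj, ih₁, ih₂]
  | disj φ₁ φ₂ ih₁ ih₂ => rw [prog, sat_disj, sat_disj, ih₁, ih₂]
  | next φ => exact sat_prog_next φ w τ
  | wnext φ => exact sat_prog_wnext φ w τ
  | untl φ₁ φ₂ ih₁ ih₂ =>
    rw [prog_untl, sat_untl_cons_iff_expansion]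
    simp only [sat_disj, sat_conj, sat_prog_next, ih₁, ih₂]
  | release φ₁ φ₂ ih₁ ih₂ =>
    rw [prog_release, sat_release_cons_iff_expansion]
    simp only [sat_conj, sat_disj, sat_prog_wnext, ih₁, ih₂]

/-- The language of a formula: the finite traces, including possibly the empty one, that satisfy
it, as a `Language` over the alphabet `Set P` so that left quotients apply. -/
def language (φ : LTLf P) : Language (Set P) := {τ | Sat τ φ}

theorem mem_language {φ : LTLf P} {τ : List (Set P)} : τ ∈ φ.language ↔ Sat τ φ :=
  Iff.rfl

theorem language_prog (φ : LTLf P) (w : Set P) :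
    (φ.prog w).language = φ.language.leftQuotient [w] :=
  Set.ext (sat_prog φ w)

theorem language_progTrace (φ : LTLf P) (h : List (Set P)) :
    (φ.progTrace h).language = φ.language.leftQuotient h := by
  induction h generalizing φ with
  | nil => rfl
  | cons w h ih =>
    calc (φ.progTrace (w :: h)).language
      _ = (φ.prog w).language.leftQuotient h := ih (φ.prog w)
      _ = (φ.language.leftQuotient [w]).leftQuotient h := by rw [language_prog]
      _ = φ.language.leftQuotient (w :: h) := (φ.language.leftQuotient_append [w] h).symm

end LTLf

/-- If the DFA A accepts exactly the finite (possibly empty) traces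
satisfying φ, then for every finite trace h the DFA progression A_h of A through h
accepts exactly the finite (possibly empty) traces satisfying prog(φ, h). -/
theorem dfa_progress_accepts_progTrace {P : Type} {S : Type}
    (φ : LTLf P) (A : DFA (Set P) S)
    (hA : ∀ τ : List (Set P), τ ∈ A.accepts ↔ LTLf.Sat τ φ) (h : List (Set P)) :
    ∀ τ : List (Set P), τ ∈ (A.progress h).accepts ↔ LTLf.Sat τ (φ.progTrace h) := by
  have accepts_eq : A.accepts = φ.language := Set.ext hA
  have progress_accepts_eq : (A.progress h).accepts = (φ.progTrace h).language := by
    rw [accepts_progress, accepts_eq, LTLf.language_progTrace]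
  intro τ
  rw [progress_accepts_eq, LTLf.mem_language]
end

section
/- Let Y and X be disjoint finite sets of agent and environment atoms, φ_org and φ_new LTLf formulas over Y ∪ X, h a history, and A_org, A_new DFAs over the alphabet 2^(Y∪X) with finitely many states whose accepted words are exactly the finite, possibly empty traces satisfying φ_org and φ_new, respectively. Let G be the product DFA game (A_org)_h × A_new, where (A_org)_h is the DFA progression of A_org through h. Then incremental synthesis for (φ_org, h, φ_new) is realizable if and only if there exists a game strategy κ winning in G; moreover, if κ is winning in G then the induced strategy σ_(G,κ) solves incremental synthesis for (φ_org, h, φ_new). -/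
/-- The joint interpretation over atoms `Y ⊕ X` determined by an agent move `m.1 ⊆ Y`
and an environment move `m.2 ⊆ X`. -/
def joint {Y X : Type} (m : Set Y × Set X) : Set (Y ⊕ X) :=
  {a | Sum.elim (· ∈ m.1) (· ∈ m.2) a}

/-- The finite trace (over `2^(Y∪X)`) formed by the first `k` joint moves of a play. -/
def jointTrace {Y X : Type} (π : ℕ → Set Y × Set X) (k : ℕ) : List (Set (Y ⊕ X)) :=
  (List.range k).map fun i => joint (π i)

/-- The finite trace corresponding to a history (finite sequence of joint moves). -/
def histTrace {Y X : Type} (h : List (Set Y × Set X)) : List (Set (Y ⊕ X)) :=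
  h.map joint

/-- A play is σ-consistent if at every instant the agent move is the one prescribed by
the strategy σ on the preceding environment moves (in particular `Y_0 = σ(ε)`). -/
def PlayConsistent {Y X : Type} (σ : List (Set X) → Set Y) (π : ℕ → Set Y × Set X) : Prop :=
  ∀ i : ℕ, (π i).1 = σ ((List.range i).map fun j => (π j).2)

/-- A history is σ-consistent if every agent move in it is prescribed by σ on the
preceding environment moves. -/
def HistConsistent {Y X : Type} (σ : List (Set X) → Set Y) (h : List (Set Y × Set X)) : Prop :=
  ∀ (i : ℕ) (hi : i < h.length), (h.get ⟨i, hi⟩).1 = σ ((h.take i).map Prod.snd)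
/-- A strategy σ is winning for the LTLf formula φ over atoms Y ∪ X if every
σ-consistent play has a finite, possibly empty, prefix satisfying φ. -/
def WinningFor {Y X : Type} (σ : List (Set X) → Set Y) (φ : LTLf (Y ⊕ X)) : Prop :=
  ∀ π : ℕ → Set Y × Set X, PlayConsistent σ π → ∃ k : ℕ, LTLf.Sat (jointTrace π k) φ

/-- A strategy σ is winning for φ assuming the history h if for every σ-consistent play τ
the concatenation h·τ has a finite, possibly empty, prefix (extending h) satisfying φ. -/
def WinningAssuming {Y X : Type} (σ : List (Set X) → Set Y) (φ : LTLf (Y ⊕ X))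
    (h : List (Set Y × Set X)) : Prop :=
  ∀ π : ℕ → Set Y × Set X, PlayConsistent σ π →
    ∃ k : ℕ, LTLf.Sat (histTrace h ++ jointTrace π k) φ

/-- A strategy σ solves incremental synthesis for (φ_org, h, φ_new) if every σ-consistent
play has a finite, possibly empty, prefix ρ such that h·ρ satisfies φ_org and ρ
satisfies φ_new. -/
def SolvesIncremental {Y X : Type} (σ : List (Set X) → Set Y) (φorg : LTLf (Y ⊕ X))
    (h : List (Set Y × Set X)) (φnew : LTLf (Y ⊕ X)) : Prop :=
  ∀ π : ℕ → Set Y × Set X, PlayConsistent σ π →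
    ∃ k : ℕ, LTLf.Sat (histTrace h ++ jointTrace π k) φorg ∧ LTLf.Sat (jointTrace π k) φnew

/-- A play is κ-consistent in the DFA game `G` if at every instant the agent move is the
one prescribed by the game strategy κ on the state that `G` reaches from its start state
on reading the joint trace so far (in particular `Y_0 = κ(ι)`). -/
def GameConsistent {Y X S : Type} (G : DFA (Set (Y ⊕ X)) S) (κ : S → Set Y)
    (π : ℕ → Set Y × Set X) : Prop :=
  ∀ i : ℕ, (π i).1 = κ (G.evalFrom G.start (jointTrace π i))

/-- A game strategy κ is winning in the DFA game `G` if every κ-consistent play has a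
finite prefix accepted by `G`. -/
def GameWinning {Y X S : Type} (G : DFA (Set (Y ⊕ X)) S) (κ : S → Set Y) : Prop :=
  ∀ π : ℕ → Set Y × Set X, GameConsistent G κ π →
    ∃ k : ℕ, G.evalFrom G.start (jointTrace π k) ∈ G.accept

/-- The fixpoint approximants of the winning region: W₀ = F and
W_{i+1} = W_i ∪ { s | ∃ Y' ⊆ Y, ∀ X' ⊆ X, δ(s, Y'∪X') ∈ W_i }. -/
def WinApprox {Y X S : Type} (G : DFA (Set (Y ⊕ X)) S) : ℕ → Set S
  | 0 => G.accept
  | i + 1 => WinApprox G i ∪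
      {s | ∃ A : Set Y, ∀ E : Set X, G.step s (joint (A, E)) ∈ WinApprox G i}

/-- The state of the DFA game `G` reached from state `s` against the environment move
sequence `e` when the agent plays according to the game strategy κ. -/
def inducedState {Y X S : Type} (G : DFA (Set (Y ⊕ X)) S) (κ : S → Set Y) :
    S → List (Set X) → S
  | s, [] => s
  | s, x :: e => inducedState G κ (G.step s (joint (κ s, x))) e

/-- The agent strategy induced by the game strategy κ on the DFA game `G`:
σ(ε) = κ(ι) and σ(X₀⋯Xₙ) = κ(δ(ι, (Y₀∪X₀)⋯(Yₙ∪Xₙ))) with the agent moves Yᵢ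
themselves determined recursively by the strategy. -/
def inducedStrategy {Y X S : Type} (G : DFA (Set (Y ⊕ X)) S) (κ : S → Set Y)
    (e : List (Set X)) : Set Y :=
  κ (inducedState G κ G.start e)

/-!
The agent, with or without memory, can win the reachability game of a DFA exactly when the start
state lies in the least fixed point of the attractor map. Inside this winning region, states are
ranked by the ordinal stage at which they enter it, and a move lowering the rank can be chosen for
each state once and for all. Outside it, the environment can answer every agent move by staying
outside, whatever the agent remembers of the past. Hence memory does not help the agent, and because
the product of `(A_org)_h` and `A_new` accepts `ρ` exactly when `h·ρ` satisfies `φ_org` and `ρ`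
satisfies `φ_new`, this determinacy is the claim about incremental synthesis.
-/

open OrdinalApprox

section Traces

theorem exists_seq_eq_apply_map_range {α : Type*} (F : List α → α) :
    ∃ f : ℕ → α, ∀ n, f n = F ((List.range n).map f) := by
  let l : ℕ → List α := fun n => (fun t => t ++ [F t])^[n] []
  refine ⟨fun n => F (l n), fun n => congrArg F ?_⟩
  induction n with
  | zero => rfl
  | succ n ih =>
    rw [List.range_succ, List.map_append, ← ih]
    exact Function.iterate_succ_apply' _ n []

variable {Y X : Type}

theorem exists_playConsistent_forall_snd_eq (σ : List (Set X) → Set Y)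
    (ρ : List (Set Y × Set X) → Set Y → Set X) :
    ∃ π : ℕ → Set Y × Set X, PlayConsistent σ π ∧
      ∀ k, (π k).2 = ρ ((List.range k).map π) (π k).1 := by
  obtain ⟨π, hπ⟩ := exists_seq_eq_apply_map_range fun l : List (Set Y × Set X) =>
    (σ (l.map Prod.snd), ρ l (σ (l.map Prod.snd)))
  have hfst (k : ℕ) : (π k).1 = σ (((List.range k).map π).map Prod.snd) :=
    congrArg Prod.fst (hπ k)
  refine ⟨π, fun k => ?_, fun k => ?_⟩
  · rw [hfst, List.map_map]
    rfl
  · rw [hfst]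
    exact congrArg Prod.snd (hπ k)

theorem histTrace_map_range (π : ℕ → Set Y × Set X) (k : ℕ) :
    histTrace ((List.range k).map π) = jointTrace π k :=
  List.map_map

theorem eval_jointTrace_succ {S : Type*} (G : DFA (Set (Y ⊕ X)) S) (π : ℕ → Set Y × Set X)
    (k : ℕ) :
    G.eval (jointTrace π (k + 1)) = G.step (G.eval (jointTrace π k)) (joint (π k)) := by
  rw [jointTrace, List.range_succ, List.map_append, List.map_singleton,
    DFA.eval_append_singleton, jointTrace]

end Traces

section Automata

universe u

variable {α : Type*}

theorem mem_accepts_progress {S : Type*} (A : DFA α S) (u w : List α) :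
    w ∈ (A.progress u).accepts ↔ u ++ w ∈ A.accepts := by
  rw [DFA.mem_accepts, DFA.mem_accepts, DFA.eval, DFA.eval, DFA.evalFrom_of_append]
  rfl

theorem mem_accepts_product {S₁ S₂ : Type u} (A₁ : DFA α S₁) (A₂ : DFA α S₂) (w : List α) :
    w ∈ (A₁.product A₂).accepts ↔ w ∈ A₁.accepts ∧ w ∈ A₂.accepts := by
  have hinter : A₁.product A₂ = A₁.inter A₂ := rfl
  rw [hinter, DFA.accepts_inter, Language.mem_inf]

end Automata

section Attractor

variable {Y X S : Type} (G : DFA (Set (Y ⊕ X)) S)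

/-- The controllable predecessor of `Z`: the states from which a single agent move, chosen before
the environment's, forces the next state into `Z`. -/
def controllablePre (Z : Set S) : Set S :=
  {s | ∃ A : Set Y, ∀ E : Set X, G.step s (joint (A, E)) ∈ Z}

theorem controllablePre_mono : Monotone (controllablePre G) :=
  fun _ _ hZ _ ⟨A, hA⟩ => ⟨A, fun E => hZ (hA E)⟩

/-- The attractor map, one step of the backward fixpoint computation of the winning region. -/
def attractorMap : Set S →o Set S where
  toFun Z := G.accept ∪ controllablePre G Z
  monotone' := fun _ _ hZ => Set.union_subset_union_right _ (controllablePre_mono G hZ)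

/-- The winning region of the game `G`: the states from which the agent can force a visit to an
accepting state. -/
def winningRegion : Set S :=
  (attractorMap G).lfp

/-- The approximant of the winning region at stage `a`, with value `∅` at `0`. The stages are
ordinals, since with infinitely many environment moves the finite ones need not exhaust the
winning region. -/
noncomputable def attractor (a : Ordinal) : Set S :=
  lfpApprox (attractorMap G) ⊥ a

theorem mem_attractor_iff {a : Ordinal} {s : S} :
    s ∈ attractor G a ↔ ∃ b < a, s ∈ G.accept ∨ s ∈ controllablePre G (attractor G b) := by
  have hstage : attractor G a = ∅ ∪ ⋃ b < a, G.accept ∪ controllablePre G (attractor G b) := by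
    rw [attractor, lfpApprox]
    rfl
  simp only [hstage, Set.empty_union, Set.mem_iUnion, Set.mem_union, exists_prop]

theorem exists_attractor_eq_winningRegion : ∃ a, attractor G a = winningRegion G :=
  lfp_mem_range_lfpApprox _

theorem accept_union_controllablePre_winningRegion :
    G.accept ∪ controllablePre G (winningRegion G) = winningRegion G :=
  (attractorMap G).map_lfp

end Attractor

section Determinacy

variable {Y X S : Type} (G : DFA (Set (Y ⊕ X)) S)

theorem exists_strategy_forall_step_mem_attractor :
    ∃ κ : S → Set Y, ∀ s ∉ G.accept, ∀ a, s ∈ attractor G a →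
      ∃ b < a, ∀ E : Set X, G.step s (joint (κ s, E)) ∈ attractor G b := by
  suffices hmove : ∀ s, ∃ A : Set Y, s ∉ G.accept → ∀ a, s ∈ attractor G a →
      ∃ b < a, ∀ E : Set X, G.step s (joint (A, E)) ∈ attractor G b from
    Classical.skolem.1 hmove
  intro s
  let stages : Set Ordinal := {b | s ∈ controllablePre G (attractor G b)}
  have exists_stage_lt {a : Ordinal} (hs : s ∉ G.accept) (ha : s ∈ attractor G a) :
      ∃ b < a, b ∈ stages := by
    obtain ⟨b, hb, hsb⟩ := (mem_attractor_iff G).1 ha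
    exact ⟨b, hb, hsb.resolve_left hs⟩
  by_cases hstages : stages.Nonempty
  · -- The least stage works for all `a` at once, which is what makes the move depend on `s` only.
    obtain ⟨A, hA⟩ : sInf stages ∈ stages := csInf_mem hstages
    refine ⟨A, fun hs a ha => ⟨sInf stages, ?_, hA⟩⟩
    obtain ⟨b, hba, hb⟩ := exists_stage_lt hs ha
    exact (csInf_le' hb).trans_lt hba
  · refine ⟨∅, fun hs a ha => ?_⟩
    obtain ⟨b, -, hb⟩ := exists_stage_lt hs ha
    exact (hstages ⟨b, hb⟩).elim

theorem exists_gameWinning_of_start_mem_winningRegion (hG : G.start ∈ winningRegion G) :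
    ∃ κ : S → Set Y, GameWinning G κ := by
  obtain ⟨κ, hκ⟩ := exists_strategy_forall_step_mem_attractor G
  refine ⟨κ, fun π hπ => ?_⟩
  have reaches_accept (a : Ordinal) :
      ∀ k, G.eval (jointTrace π k) ∈ attractor G a → ∃ k, G.eval (jointTrace π k) ∈ G.accept := by
    induction a using WellFoundedLT.induction with
    | ind a ih =>
      intro k hk
      by_cases hacc : G.eval (jointTrace π k) ∈ G.accept
      · exact ⟨k, hacc⟩
      obtain ⟨b, hba, hb⟩ := hκ _ hacc a hk
      have hmove : κ (G.eval (jointTrace π k)) = (π k).1 := (hπ k).symm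
      refine ih b hba (k + 1) ?_
      rw [eval_jointTrace_succ]
      simpa only [hmove] using hb (π k).2
  obtain ⟨a, ha⟩ := exists_attractor_eq_winningRegion G
  exact reaches_accept a 0 (ha ▸ hG)

theorem exists_step_notMem_winningRegion {s : S} (hs : s ∉ winningRegion G) (A : Set Y) :
    ∃ E : Set X, G.step s (joint (A, E)) ∉ winningRegion G := by
  rw [← accept_union_controllablePre_winningRegion] at hs
  by_contra! hforce
  exact hs (Or.inr ⟨A, hforce⟩)

theorem exists_playConsistent_forall_eval_notMem_winningRegion (hG : G.start ∉ winningRegion G)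
    (σ : List (Set X) → Set Y) :
    ∃ π : ℕ → Set Y × Set X, PlayConsistent σ π ∧
      ∀ k, G.eval (jointTrace π k) ∉ winningRegion G := by
  choose! escape hescape using fun s (hs : s ∉ winningRegion G) =>
    exists_step_notMem_winningRegion G hs
  obtain ⟨π, hσ, hπ⟩ := exists_playConsistent_forall_snd_eq σ
    fun l A => escape (G.eval (histTrace l)) A
  refine ⟨π, hσ, fun k => ?_⟩
  induction k with
  | zero => exact hG
  | succ k ih =>
    have hmove : π k = ((π k).1, escape (G.eval (jointTrace π k)) (π k).1) :=
      Prod.ext rfl ((hπ k).trans (by rw [histTrace_map_range]))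
    rw [eval_jointTrace_succ, hmove]
    exact hescape _ ih _

/-- An agent strategy, which may remember all past environment moves, is winning in the DFA game
`G` if every play consistent with it has a finite prefix accepted by `G`. -/
def AgentWinning (σ : List (Set X) → Set Y) : Prop :=
  ∀ π : ℕ → Set Y × Set X, PlayConsistent σ π → ∃ k, jointTrace π k ∈ G.accepts

variable {G}

theorem AgentWinning.start_mem_winningRegion {σ : List (Set X) → Set Y}
    (hσ : AgentWinning G σ) : G.start ∈ winningRegion G := by
  by_contra hG
  obtain ⟨π, hπ, havoid⟩ := exists_playConsistent_forall_eval_notMem_winningRegion G hG σ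
  obtain ⟨k, hk⟩ := hσ π hπ
  rw [← accept_union_controllablePre_winningRegion] at havoid
  exact havoid k (Or.inl hk)

end Determinacy

section InducedStrategy

variable {Y X S : Type} {G : DFA (Set (Y ⊕ X)) S} {κ : S → Set Y}

theorem inducedState_eq_foldl (G : DFA (Set (Y ⊕ X)) S) (κ : S → Set Y) (s : S)
    (e : List (Set X)) :
    inducedState G κ s e = e.foldl (fun t E => G.step t (joint (κ t, E))) s := by
  induction e generalizing s with
  | nil => rfl
  | cons _ _ ih => exact ih _

theorem PlayConsistent.inducedState_eq_eval {π : ℕ → Set Y × Set X}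
    (hπ : PlayConsistent (inducedStrategy G κ) π) (k : ℕ) :
    inducedState G κ G.start ((List.range k).map fun j => (π j).2) =
      G.eval (jointTrace π k) := by
  induction k with
  | zero => rfl
  | succ k ih =>
    have hmove : κ (G.eval (jointTrace π k)) = (π k).1 := by
      rw [hπ k, inducedStrategy, ih]
    rw [inducedState_eq_foldl] at ih ⊢
    rw [eval_jointTrace_succ, List.range_succ, List.map_append, List.foldl_append, ih,
      List.map_singleton, List.foldl_cons, List.foldl_nil, hmove]

theorem PlayConsistent.gameConsistent {π : ℕ → Set Y × Set X}
    (hπ : PlayConsistent (inducedStrategy G κ) π) : GameConsistent G κ π :=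
  fun k => (hπ k).trans (congrArg κ (hπ.inducedState_eq_eval k))

theorem GameWinning.agentWinning_inducedStrategy (hκ : GameWinning G κ) :
    AgentWinning G (inducedStrategy G κ) :=
  fun π hπ => hκ π hπ.gameConsistent

theorem exists_agentWinning_iff_exists_gameWinning :
    (∃ σ, AgentWinning G σ) ↔ ∃ κ, GameWinning G κ :=
  ⟨fun ⟨_, hσ⟩ => exists_gameWinning_of_start_mem_winningRegion G hσ.start_mem_winningRegion,
    fun ⟨_, hκ⟩ => ⟨_, hκ.agentWinning_inducedStrategy⟩⟩

end InducedStrategy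

theorem solvesIncremental_iff_agentWinning {Y X S₁ S₂ : Type} {φorg φnew : LTLf (Y ⊕ X)}
    {Aorg : DFA (Set (Y ⊕ X)) S₁} {Anew : DFA (Set (Y ⊕ X)) S₂}
    (horg : ∀ τ : List (Set (Y ⊕ X)), τ ∈ Aorg.accepts ↔ LTLf.Sat τ φorg)
    (hnew : ∀ τ : List (Set (Y ⊕ X)), τ ∈ Anew.accepts ↔ LTLf.Sat τ φnew)
    (h : List (Set Y × Set X)) (σ : List (Set X) → Set Y) :
    SolvesIncremental σ φorg h φnew ↔
      AgentWinning ((Aorg.progress (histTrace h)).product Anew) σ := by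
  simp only [SolvesIncremental, AgentWinning, mem_accepts_product, mem_accepts_progress, horg,
    hnew]

theorem incremental_synthesis_via_dfa_game_general {Y X S₁ S₂ : Type}
    (φorg φnew : LTLf (Y ⊕ X)) (h : List (Set Y × Set X))
    (Aorg : DFA (Set (Y ⊕ X)) S₁) (Anew : DFA (Set (Y ⊕ X)) S₂)
    (horg : ∀ τ : List (Set (Y ⊕ X)), τ ∈ Aorg.accepts ↔ LTLf.Sat τ φorg)
    (hnew : ∀ τ : List (Set (Y ⊕ X)), τ ∈ Anew.accepts ↔ LTLf.Sat τ φnew) :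
    ((∃ σ : List (Set X) → Set Y, SolvesIncremental σ φorg h φnew) ↔
        (∃ κ : S₁ × S₂ → Set Y,
          GameWinning ((Aorg.progress (histTrace h)).product Anew) κ)) ∧
      ∀ κ : S₁ × S₂ → Set Y,
        GameWinning ((Aorg.progress (histTrace h)).product Anew) κ →
          SolvesIncremental
            (inducedStrategy ((Aorg.progress (histTrace h)).product Anew) κ)
            φorg h φnew := by
  simp only [solvesIncremental_iff_agentWinning horg hnew]
  exact ⟨exists_agentWinning_iff_exists_gameWinning,
    fun _ hκ => hκ.agentWinning_inducedStrategy⟩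

/-- Let A_org, A_new accept exactly the finite, possibly empty, traces
satisfying φ_org and φ_new respectively, and let G = (A_org)_h × A_new. Then incremental
synthesis for (φ_org, h, φ_new) is realizable iff some game strategy is winning in G;
moreover every winning game strategy κ in G induces a strategy σ_(G,κ) solving
incremental synthesis for (φ_org, h, φ_new). -/
theorem incremental_synthesis_via_dfa_game {Y X S₁ S₂ : Type}
    [Fintype Y] [Fintype X] [Fintype S₁] [Fintype S₂]
    (φorg φnew : LTLf (Y ⊕ X)) (h : List (Set Y × Set X))
    (Aorg : DFA (Set (Y ⊕ X)) S₁) (Anew : DFA (Set (Y ⊕ X)) S₂)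
    (horg : ∀ τ : List (Set (Y ⊕ X)), τ ∈ Aorg.accepts ↔ LTLf.Sat τ φorg)
    (hnew : ∀ τ : List (Set (Y ⊕ X)), τ ∈ Anew.accepts ↔ LTLf.Sat τ φnew) :
    ((∃ σ : List (Set X) → Set Y, SolvesIncremental σ φorg h φnew) ↔
        (∃ κ : S₁ × S₂ → Set Y,
          GameWinning ((Aorg.progress (histTrace h)).product Anew) κ)) ∧
      ∀ κ : S₁ × S₂ → Set Y,
        GameWinning ((Aorg.progress (histTrace h)).product Anew) κ →
          SolvesIncremental
            (inducedStrategy ((Aorg.progress (histTrace h)).product Anew) κ)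
            φorg h φnew :=
  incremental_synthesis_via_dfa_game_general φorg φnew h Aorg Anew horg hnew
end
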